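/- arXiv:2003.11416 — 4 statements merged into one kernel-verified Lean document; each statement's English description precedes it below -/
import Mathlib

section
/- In the valuation setting below, let δ = δ_α be a threshold coloring for some α ∈ ℤ. Suppose H = (v₁, v₂, v₃, v₄) is a 4-cycle of G whose four edges v₁v₂, v₂v₃, v₃v₄, v₄v₁ are all blue under δ, and suppose there exist a path in G from v₁ to v₃ and a path in G from v₂ to v₄ all of whose edges are red under δ. Then λ(v₁v₂)² + λ(v₃v₄)² = λ(v₂v₃)² + λ(v₁v₄)². -/
noncomputable section

/-- `W_{u,v} = (x_v − x_u) + i(y_v − y_u)`, computed in a field `F` containing `ℂ`. -/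
def Wmap {V F : Type*} [Field F] (ι : ℂ →+* F) (x y : V → F) (u v : V) : F :=
  (x v - x u) + ι Complex.I * (y v - y u)

/-!
With `p = x + i y` and `q = x - i y` the edge equations become
`(p v - p u) * (q v - q u) = λ(uv)²`. Orient the edges of the cycle out of `v₂` and `v₄`. Modulo
terms of valuation larger than that of `w = p v₃ - p v₂`, a red path identifies the values of `p`
at its ends, so all four `p`-differences agree with `w`. Hence `λ(uv)²` is congruent to
`w * (q v - q u)` modulo the maximal ideal of the valuation ring, and since the alternating sum of
the `q`-differences around the cycle vanishes, that of the constants `λ(uv)²` lies in the maximal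
ideal. A nonzero constant has valuation `0`, so this sum is zero.
-/

section Valuation

variable {R Γ₀ : Type*} [LinearOrderedAddCommMonoidWithTop Γ₀]

theorem lt_map_sub_of_walk {V : Type*} {G : SimpleGraph V} [Ring R] (v : AddValuation R Γ₀)
    {α : Γ₀} (hα : α ≠ ⊤) (p : V → R) {a b : V} (P : G.Walk a b)
    (hP : ∀ d ∈ P.darts, α < v (p d.snd - p d.fst)) : α < v (p b - p a) := by
  induction P with
  | nil => simpa only [sub_self, v.map_zero] using hα.lt_top
  | @cons a c b h P ih =>
    rw [SimpleGraph.Walk.darts_cons, List.forall_mem_cons] at hP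
    rw [← sub_add_sub_cancel]
    exact v.map_lt_add (ih hP.2) hP.1

variable [CommRing R] (v : AddValuation R Γ₀)

theorem map_mul_sub_mul_pos {w a z : R} (haw : v w < v (a - w)) (haz : 0 ≤ v (a * z)) :
    0 < v (a * z - w * z) := by
  rw [← sub_mul, v.map_mul]
  rw [v.map_mul, v.map_eq_of_lt_sub haw] at haz
  rcases eq_or_ne (v z) ⊤ with hz | hz
  · rw [hz, add_top, lt_top_iff_ne_top]
    exact fun h ↦ haw.ne_top (by rw [← zero_add (v w), h, top_add])
  · exact haz.trans_lt ((add_lt_add_iff_left_of_ne_top hz).2 haw)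

theorem map_alternating_sum_pos {p₁ p₂ p₃ p₄ q₁ q₂ q₃ q₄ : R}
    (h13 : v (p₃ - p₂) < v (p₃ - p₁)) (h24 : v (p₃ - p₂) < v (p₄ - p₂))
    (h12 : 0 ≤ v ((p₁ - p₂) * (q₁ - q₂))) (h34 : 0 ≤ v ((p₃ - p₄) * (q₃ - q₄)))
    (h14 : 0 ≤ v ((p₁ - p₄) * (q₁ - q₄))) :
    0 < v ((p₁ - p₂) * (q₁ - q₂) + (p₃ - p₄) * (q₃ - q₄)
      - ((p₃ - p₂) * (q₃ - q₂) + (p₁ - p₄) * (q₁ - q₄))) := by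
  rw [v.map_sub_swap _ p₁] at h13
  rw [v.map_sub_swap p₄] at h24
  have near12 : v (p₃ - p₂) < v (p₁ - p₂ - (p₃ - p₂)) := by rwa [sub_sub_sub_cancel_right]
  have near34 : v (p₃ - p₂) < v (p₃ - p₄ - (p₃ - p₂)) := by rwa [sub_sub_sub_cancel_left]
  have near14 : v (p₃ - p₂) < v (p₁ - p₄ - (p₃ - p₂)) := by
    convert v.map_lt_add h13 h24 using 2
    ring
  have pos14 := map_mul_sub_mul_pos v near14 h14
  rw [v.map_sub_swap] at pos14
  convert v.map_lt_add (v.map_lt_add (map_mul_sub_mul_pos v near12 h12)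
    (map_mul_sub_mul_pos v near34 h34)) pos14 using 2
  ring

end Valuation

section NonzeroValues

variable {F Γ : Type*} [Field F] [AddCommGroup Γ] [LinearOrder Γ] [IsOrderedAddMonoid Γ]
  (ν : F → Γ) (hmul : ∀ a b, a ≠ 0 → b ≠ 0 → ν (a * b) = ν a + ν b)
  (hadd : ∀ a b, a ≠ 0 → b ≠ 0 → a + b ≠ 0 → min (ν a) (ν b) ≤ ν (a + b))

open Classical in
/-- The additive valuation of a field given by its values `ν` on nonzero elements; the value `ν 0`
is discarded and replaced by `⊤`. -/
def addValuationOfNeZero : AddValuation F (WithTop Γ) :=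
  AddValuation.of (fun t ↦ if t = 0 then ⊤ else (ν t : WithTop Γ)) (if_pos rfl)
    (by
      have h : ν 1 = ν 1 + ν 1 := by simpa only [mul_one] using hmul 1 1 one_ne_zero one_ne_zero
      rw [if_neg one_ne_zero, left_eq_add.1 h, WithTop.coe_zero])
    (fun a b ↦ by
      rcases eq_or_ne a 0 with rfl | ha
      · simp
      rcases eq_or_ne b 0 with rfl | hb
      · simp
      rcases eq_or_ne (a + b) 0 with hab | hab
      · simp [hab]
      simpa only [if_neg ha, if_neg hb, if_neg hab, ← WithTop.coe_min, WithTop.coe_le_coe]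
        using hadd a b ha hb hab)
    (fun a b ↦ by
      rcases eq_or_ne a 0 with rfl | ha
      · simp
      rcases eq_or_ne b 0 with rfl | hb
      · simp
      rw [if_neg ha, if_neg hb, if_neg (mul_ne_zero ha hb), hmul a b ha hb, WithTop.coe_add])

theorem addValuationOfNeZero_apply {t : F} (ht : t ≠ 0) :
    addValuationOfNeZero ν hmul hadd t = ν t :=
  if_neg ht

theorem addValuationOfNeZero_le {α : Γ} {t : F} (ht : t ≠ 0) (h : ν t ≤ α) :
    addValuationOfNeZero ν hmul hadd t ≤ α := by
  simpa only [addValuationOfNeZero_apply ν hmul hadd ht, WithTop.coe_le_coe] using h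

theorem lt_addValuationOfNeZero {α : Γ} {t : F} (h : α < ν t) :
    (α : WithTop Γ) < addValuationOfNeZero ν hmul hadd t := by
  rcases eq_or_ne t 0 with rfl | ht
  · simpa only [AddValuation.map_zero] using WithTop.coe_lt_top α
  · simpa only [addValuationOfNeZero_apply ν hmul hadd ht, WithTop.coe_lt_coe] using h

end NonzeroValues

theorem sq_add_sq_eq_mul {R : Type*} [CommRing R] {i : R} (hi : i ^ 2 = -1) (a b : R) :
    a ^ 2 + b ^ 2 = (a + i * b) * (a - i * b) := by
  linear_combination b ^ 2 * hi

theorem map_I_sq {R : Type*} [Ring R] (ι : ℂ →+* R) : ι Complex.I ^ 2 = -1 := by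
  rw [← map_pow, Complex.I_sq, map_neg, map_one]

theorem Wmap_ne_zero {V F : Type*} [Field F] (ι : ℂ →+* F) {x y : V → F} {u v : V}
    (h : (x u - x v) ^ 2 + (y u - y v) ^ 2 ≠ 0) : Wmap ι x y u v ≠ 0 := by
  rw [← neg_sub (x v), ← neg_sub (y v), neg_sq, neg_sq, sq_add_sq_eq_mul (map_I_sq ι)] at h
  exact left_ne_zero_of_mul h

theorem blue_cycle_red_paths_orthogonal_diagonals_general
    {V K F Γ₀ : Type*} [Field K] [Field F] [LinearOrderedAddCommMonoidWithTop Γ₀]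
    (G : SimpleGraph V) (lam : Sym2 V → K) (ι : K →+* F) {i : F} (hi : i ^ 2 = -1) (x y : V → F)
    (v : AddValuation F Γ₀) {α : Γ₀} (hα : α ≠ ⊤)
    (hedge : ∀ ⦃a b : V⦄, G.Adj a b →
      (x a - x b) ^ 2 + (y a - y b) ^ 2 = (ι (lam s(a, b))) ^ 2)
    (hv : ∀ c : K, c ≠ 0 → v (ι c) = 0)
    {v₁ v₂ v₃ v₄ : V}
    (h12 : G.Adj v₁ v₂) (h23 : G.Adj v₂ v₃) (h34 : G.Adj v₃ v₄) (h41 : G.Adj v₄ v₁)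
    (hb23 : v (x v₃ - x v₂ + i * (y v₃ - y v₂)) ≤ α)
    (hP1 : ∃ P : G.Walk v₁ v₃, ∀ d ∈ P.darts,
      α < v (x d.snd - x d.fst + i * (y d.snd - y d.fst)))
    (hP2 : ∃ P : G.Walk v₂ v₄, ∀ d ∈ P.darts,
      α < v (x d.snd - x d.fst + i * (y d.snd - y d.fst))) :
    lam s(v₁, v₂) ^ 2 + lam s(v₃, v₄) ^ 2 = lam s(v₂, v₃) ^ 2 + lam s(v₁, v₄) ^ 2 := by
  set p : V → F := fun a ↦ x a + i * y a with hp
  set q : V → F := fun a ↦ x a - i * y a with hq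
  have p_sub (a b : V) : x a - x b + i * (y a - y b) = p a - p b := by simp only [hp]; ring
  have q_sub (a b : V) : x a - x b - i * (y a - y b) = q a - q b := by simp only [hq]; ring
  have factored {a b : V} (h : G.Adj a b) :
      (p a - p b) * (q a - q b) = ι (lam s(a, b) ^ 2) := by
    rw [map_pow, ← hedge h, sq_add_sq_eq_mul hi, p_sub, q_sub]
  simp only [p_sub] at hb23 hP1 hP2
  obtain ⟨P1, hP1⟩ := hP1
  obtain ⟨P2, hP2⟩ := hP2
  have v_nonneg (c : K) : 0 ≤ v (ι c) := by
    rcases eq_or_ne c 0 with rfl | hc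
    · simp only [map_zero, v.map_zero, le_top]
    · exact (hv c hc).ge
  have key := map_alternating_sum_pos v (q₁ := q v₁) (q₂ := q v₂) (q₃ := q v₃) (q₄ := q v₄)
    (hb23.trans_lt (lt_map_sub_of_walk v hα p P1 hP1))
    (hb23.trans_lt (lt_map_sub_of_walk v hα p P2 hP2))
    (factored h12 ▸ v_nonneg _) (factored h34 ▸ v_nonneg _) (factored h41.symm ▸ v_nonneg _)
  rw [factored h12, factored h34, factored h23.symm, factored h41.symm, ← map_add, ← map_add,
    ← map_sub, Sym2.eq_swap (a := v₃) (b := v₂)] at key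
  by_contra hne
  exact key.ne' (hv _ (sub_ne_zero.2 hne))

/-- Proposition on 4-cycles with blue edges and red connecting paths: in the valuation
setting, if the 4-cycle `(v₁,v₂,v₃,v₄)` is blue under the threshold coloring `δ_α` and
there are red paths `v₁–v₃` and `v₂–v₄`, then
`λ(v₁v₂)² + λ(v₃v₄)² = λ(v₂v₃)² + λ(v₁v₄)²`. -/
theorem blue_cycle_red_paths_orthogonal_diagonals
    {V F : Type*} [Fintype V] [Field F] (G : SimpleGraph V) (lam : Sym2 V → ℝ)
    (ι : ℂ →+* F) (x y : V → F) (ν : F → ℤ) (α : ℤ)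
    (hpos : ∀ e ∈ G.edgeSet, 0 < lam e)
    (hedge : ∀ ⦃u v : V⦄, G.Adj u v →
      (x u - x v) ^ 2 + (y u - y v) ^ 2 = (ι ((lam s(u, v) : ℝ) : ℂ)) ^ 2)
    (hν_mul : ∀ a b : F, a ≠ 0 → b ≠ 0 → ν (a * b) = ν a + ν b)
    (hν_add : ∀ a b : F, a ≠ 0 → b ≠ 0 → a + b ≠ 0 → min (ν a) (ν b) ≤ ν (a + b))
    (hν_triv : ∀ c : ℂ, c ≠ 0 → ν (ι c) = 0)
    (v₁ v₂ v₃ v₄ : V)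
    (h12 : G.Adj v₁ v₂) (h23 : G.Adj v₂ v₃) (h34 : G.Adj v₃ v₄) (h41 : G.Adj v₄ v₁)
    (h13 : v₁ ≠ v₃) (h24 : v₂ ≠ v₄)
    (hb12 : ν (Wmap ι x y v₁ v₂) ≤ α) (hb23 : ν (Wmap ι x y v₂ v₃) ≤ α)
    (hb34 : ν (Wmap ι x y v₃ v₄) ≤ α) (hb41 : ν (Wmap ι x y v₄ v₁) ≤ α)
    (hP1 : ∃ P : G.Walk v₁ v₃, ∀ e ∈ P.edges, ∀ a b : V, e = s(a, b) →
      α < ν (Wmap ι x y a b))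
    (hP2 : ∃ P : G.Walk v₂ v₄, ∀ e ∈ P.edges, ∀ a b : V, e = s(a, b) →
      α < ν (Wmap ι x y a b)) :
    lam s(v₁, v₂) ^ 2 + lam s(v₃, v₄) ^ 2 = lam s(v₂, v₃) ^ 2 + lam s(v₁, v₄) ^ 2 := by
  have hlam : lam s(v₂, v₃) ≠ 0 := (hpos s(v₂, v₃) h23).ne'
  have hW : Wmap ι x y v₂ v₃ ≠ 0 := Wmap_ne_zero ι (by simpa [hedge h23] using hlam)
  exact_mod_cast blue_cycle_red_paths_orthogonal_diagonals_general G (fun e ↦ (lam e : ℂ)) ι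
    (map_I_sq ι) x y (addValuationOfNeZero ν hν_mul hν_add) (WithTop.coe_ne_top (a := α)) hedge
    (fun c hc ↦ (addValuationOfNeZero_apply ν _ _ ((map_ne_zero ι).2 hc)).trans
      (congrArg _ (hν_triv c hc)))
    h12 h23 h34 h41 (addValuationOfNeZero_le ν _ _ hW hb23)
    (hP1.imp fun P hP d hd ↦
      lt_addValuationOfNeZero ν _ _ (hP d.edge (List.mem_map_of_mem hd) _ _ rfl))
    (hP2.imp fun P hP d hd ↦
      lt_addValuationOfNeZero ν _ _ (hP d.edge (List.mem_map_of_mem hd) _ _ rfl))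
end
end

section
/- In the valuation setting below, define for any NAC-coloring δ of a graph H (with edges carrying the values ν(W_e)) the gap gap_H(δ, ν) := max{0, min{ν(W_e) : e ∈ E_H, δ(e) = red} − max{ν(W_e) : e ∈ E_H, δ(e) = blue}}. Let G' be a subgraph of G with at least one edge and let δ' be a NAC-coloring of G'. Then gap_{G'}(δ', ν) = Σ_δ gap_G(δ, ν), where the sum ranges over all NAC-colorings δ of G whose restriction to E_{G'} equals δ'. -/
noncomputable section

/-- A NAC-coloring: a surjective 2-coloring (`true` = red, `false` = blue) of the edges
such that every cycle is monochromatic or contains at least two edges of each color. -/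
def IsNACColoring {V : Type*} (G : SimpleGraph V) (δ : G.edgeSet → Bool) : Prop :=
  (∃ e, δ e = true) ∧ (∃ e, δ e = false) ∧
  ∀ ⦃u : V⦄ (W : G.Walk u u), W.IsCycle →
    (∀ e : G.edgeSet, (e : Sym2 V) ∈ W.edges → δ e = true) ∨
    (∀ e : G.edgeSet, (e : Sym2 V) ∈ W.edges → δ e = false) ∨
    (2 ≤ (W.edges.attach.filter
        (fun e => δ ⟨e.1, W.edges_subset_edgeSet e.2⟩)).length ∧
     2 ≤ (W.edges.attach.filter
        (fun e => !(δ ⟨e.1, W.edges_subset_edgeSet e.2⟩))).length)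

/-- The gap of an edge coloring `δ` of `H` with respect to the valuation `ν`:
`max {0, min{ν(W_e) : e red} − max{ν(W_e) : e blue}}`. -/
def gap {V F : Type*} [Field F] (H : SimpleGraph V) (δ : H.edgeSet → Bool)
    (ι : ℂ →+* F) (x y : V → F) (ν : F → ℤ) : ℤ :=
  max 0
    (sInf {n : ℤ | ∃ a b : V, ∃ h : H.Adj a b,
        δ ⟨s(a, b), H.mem_edgeSet.mpr h⟩ = true ∧ n = ν (Wmap ι x y a b)} -
     sSup {n : ℤ | ∃ a b : V, ∃ h : H.Adj a b,
        δ ⟨s(a, b), H.mem_edgeSet.mpr h⟩ = false ∧ n = ν (Wmap ι x y a b)})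

/-!
For an integer `α`, color an edge red when `α < ν(W_e)` and blue otherwise. The gap of a coloring
using both colors is the number of thresholds `α` that produce it, so the formula counts the
thresholds producing `δ'` on `G'` according to the coloring they produce on `G`. All the colorings
met in this way are NAC-colorings: the vertex map `v ↦ x_v + i y_v`, taken modulo the elements of
valuation greater than `α`, is constant along red edges and separates the endpoints of blue ones.
Since `c = ν(W_e) + ν(Z_e)` does not depend on `e`, the map `v ↦ x_v - i y_v`, taken modulo the
elements of valuation at least `c - α`, does the same with the colors exchanged. A function on the
vertices cannot change value exactly once along a closed walk.
-/

theorem ncard_preimage_eq_finsum {A B M : Type*} [AddCommMonoidWithOne M] (f : A → B) {s : Set B}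
    (hs : (f ⁻¹' s).Finite) :
    ((f ⁻¹' s).ncard : M) = ∑ᶠ b ∈ s, ((f ⁻¹' {b}).ncard : M) := by
  set t := f '' (f ⁻¹' s) with ht
  have ht_finite : t.Finite := hs.image f
  have hts : t ⊆ s := Set.image_preimage_subset f s
  have h_union : f ⁻¹' s = ⋃ b ∈ t, f ⁻¹' {b} := by
    rw [Set.biUnion_preimage_singleton, ht, Set.preimage_image_preimage]
  calc
    ((f ⁻¹' s).ncard : M) = (∑ᶠ b ∈ t, (f ⁻¹' {b}).ncard : ℕ) := by
      have h_fiber (b : B) (hb : b ∈ t) : (f ⁻¹' {b}).Finite :=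
        hs.subset (Set.preimage_mono (Set.singleton_subset_iff.2 (hts hb)))
      rw [h_union, ht_finite.ncard_biUnion h_fiber fun b _ c _ hbc =>
        Disjoint.preimage f (Set.disjoint_singleton.2 hbc)]
    _ = ∑ᶠ b ∈ t, ((f ⁻¹' {b}).ncard : M) := Nat.cast_finsum_mem ht_finite _
    _ = ∑ᶠ b ∈ s, ((f ⁻¹' {b}).ncard : M) := by
      refine finsum_mem_inter_support_eq' _ _ _ fun b hb => ⟨@hts b, fun hbs => ?_⟩
      obtain ⟨a, rfl⟩ : (f ⁻¹' {b}).Nonempty :=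
        Set.nonempty_of_ncard_ne_zero fun h => hb (by simp [h])
      exact ⟨a, hbs, rfl⟩

section Threshold

variable {E E' : Type*}

/-- The gap of a two-coloring `δ` of an arbitrary set `E` weighted by `w`, of which the gap of an
edge coloring is the case where the weight of `e` is `ν(W_e)`. As there, `true` stands for red. -/
def colorGap (w : E → ℤ) (δ : E → Bool) : ℤ :=
  max 0 (sInf (w '' (δ ⁻¹' {true})) - sSup (w '' (δ ⁻¹' {false})))

/-- The two-coloring in which the elements of weight greater than `α` are red and the other ones
blue. -/
def thresholdColoring (w : E → ℤ) (α : ℤ) : E → Bool :=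
  fun e => decide (α < w e)

theorem thresholdColoring_preimage_singleton {w : E → ℤ} (hw : (Set.range w).Finite)
    {δ : E → Bool} (hδ : Function.Surjective δ) :
    thresholdColoring w ⁻¹' {δ} =
      Set.Ico (sSup (w '' (δ ⁻¹' {false}))) (sInf (w '' (δ ⁻¹' {true}))) := by
  have h_finite (b : Bool) : (w '' (δ ⁻¹' {b})).Finite := hw.subset (Set.image_subset_range _ _)
  have h_nonempty (b : Bool) : (w '' (δ ⁻¹' {b})).Nonempty :=
    ((Set.singleton_nonempty b).preimage hδ).image w
  ext α
  rw [Set.mem_Ico, csSup_le_iff (h_finite false).bddAbove (h_nonempty false),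
    Int.lt_iff_add_one_le, le_csInf_iff (h_finite true).bddBelow (h_nonempty true)]
  simp only [Set.mem_preimage, Set.mem_singleton_iff, Set.forall_mem_image, funext_iff,
    thresholdColoring, Int.add_one_le_iff, ← forall_and]
  refine forall_congr' fun e => ?_
  cases δ e <;> simp

theorem colorGap_eq_ncard {w : E → ℤ} (hw : (Set.range w).Finite) {δ : E → Bool}
    (hδ : Function.Surjective δ) :
    colorGap w δ = (thresholdColoring w ⁻¹' {δ}).ncard := by
  rw [thresholdColoring_preimage_singleton hw hδ, ← Finset.coe_Ico, Set.ncard_coe_finset,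
    Int.card_Ico, Int.toNat_eq_max, max_comm, colorGap]

theorem exists_thresholdColoring_eq {w : E → ℤ} (hw : (Set.range w).Finite) {δ : E → Bool}
    (hδ : Function.Surjective δ) (h_gap : colorGap w δ ≠ 0) :
    ∃ α, thresholdColoring w α = δ := by
  rw [colorGap_eq_ncard hw hδ, Nat.cast_ne_zero] at h_gap
  exact Set.nonempty_of_ncard_ne_zero h_gap

theorem colorGap_comp_eq_finsum {w : E → ℤ} (hw : (Set.range w).Finite) (r : E' → E)
    {δ' : E' → Bool} (hδ' : Function.Surjective δ') :
    colorGap (w ∘ r) δ' = ∑ᶠ δ ∈ {δ : E → Bool | δ ∘ r = δ'}, colorGap w δ := by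
  have hwr : (Set.range (w ∘ r)).Finite := hw.subset (Set.range_comp_subset_range r w)
  have h_finite : (thresholdColoring (w ∘ r) ⁻¹' {δ'}).Finite := by
    rw [thresholdColoring_preimage_singleton hwr hδ']
    exact Set.finite_Ico _ _
  calc
    colorGap (w ∘ r) δ' = (thresholdColoring (w ∘ r) ⁻¹' {δ'}).ncard :=
      colorGap_eq_ncard hwr hδ'
    _ = (thresholdColoring w ⁻¹' {δ | δ ∘ r = δ'}).ncard := rfl
    _ = ∑ᶠ δ ∈ {δ : E → Bool | δ ∘ r = δ'}, ((thresholdColoring w ⁻¹' {δ}).ncard : ℤ) :=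
      ncard_preimage_eq_finsum _ h_finite
    _ = ∑ᶠ δ ∈ {δ : E → Bool | δ ∘ r = δ'}, colorGap w δ :=
      finsum_mem_congr rfl fun δ hδ =>
        (colorGap_eq_ncard hw (Function.Surjective.of_comp (g := r) (hδ ▸ hδ'))).symm

end Threshold

section NACColoring

variable {V α β : Type*} {G : SimpleGraph V}

theorem map_eq_of_countP_edges_eq_zero [DecidableEq α] (f : V → α) {u v : V} (p : G.Walk u v)
    (hp : p.edges.countP (fun e => ¬ (e.map f).IsDiag) = 0) : f u = f v := by
  induction p with
  | nil => rfl
  | cons _ p ih =>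
    simp only [SimpleGraph.Walk.edges_cons, List.countP_cons, Nat.add_eq_zero_iff] at hp
    exact (by simpa using hp.2 : f _ = f _).trans (ih hp.1)

theorem map_ne_of_countP_edges_eq_one [DecidableEq α] (f : V → α) {u v : V} (p : G.Walk u v)
    (hp : p.edges.countP (fun e => ¬ (e.map f).IsDiag) = 1) : f u ≠ f v := by
  induction p with
  | nil => simp at hp
  | @cons a b _ _ p ih =>
    rw [SimpleGraph.Walk.edges_cons, List.countP_cons] at hp
    by_cases hab : f a = f b
    · simp only [Sym2.map_mk, hab, Sym2.mk_isDiag_iff] at hp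
      exact hab ▸ ih (by simpa using hp)
    · rw [← map_eq_of_countP_edges_eq_zero f p (by simpa [hab] using hp)]
      exact hab

theorem countP_edges_ne_one_of_closed [DecidableEq α] (f : V → α) {u : V} (p : G.Walk u u) :
    p.edges.countP (fun e => ¬ (e.map f).IsDiag) ≠ 1 :=
  fun hp => map_ne_of_countP_edges_eq_one f p hp rfl

theorem isNACColoring_of_isDiag_map {δ : G.edgeSet → Bool} (hδ : Function.Surjective δ)
    (f : V → α) (g : V → β) (h_red : ∀ e : G.edgeSet, δ e = true ↔ (e.1.map f).IsDiag)
    (h_blue : ∀ e : G.edgeSet, δ e = false ↔ (e.1.map g).IsDiag) :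
    IsNACColoring G δ := by
  classical
  refine ⟨hδ true, hδ false, fun u p _ => ?_⟩
  have count_red : (p.edges.attach.filter
      (fun e => δ ⟨e.1, p.edges_subset_edgeSet e.2⟩)).length =
      p.edges.countP (fun e => ¬ (e.map g).IsDiag) := by
    rw [← List.countP_eq_length_filter, ← List.countP_attach (l := p.edges)]
    exact List.countP_congr fun e _ => by simp [← h_blue ⟨e.1, p.edges_subset_edgeSet e.2⟩]
  have count_blue : (p.edges.attach.filter
      (fun e => !(δ ⟨e.1, p.edges_subset_edgeSet e.2⟩))).length =
      p.edges.countP (fun e => ¬ (e.map f).IsDiag) := by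
    rw [← List.countP_eq_length_filter, ← List.countP_attach (l := p.edges)]
    exact List.countP_congr fun e _ => by simp [← h_red ⟨e.1, p.edges_subset_edgeSet e.2⟩]
  rw [count_red, count_blue]
  have red_ne_one := countP_edges_ne_one_of_closed g p
  have blue_ne_one := countP_edges_ne_one_of_closed f p
  rcases Nat.eq_zero_or_pos (p.edges.countP (fun e => ¬ (e.map f).IsDiag)) with no_blue | blue_pos
  · refine .inl fun e he => (h_red e).2 ?_
    simpa using List.countP_eq_zero.1 no_blue e he
  rcases Nat.eq_zero_or_pos (p.edges.countP (fun e => ¬ (e.map g).IsDiag)) with no_red | red_pos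
  · refine .inr (.inl fun e he => (h_blue e).2 ?_)
    simpa using List.countP_eq_zero.1 no_red e he
  · exact .inr (.inr ⟨by omega, by omega⟩)

theorem isNACColoring_of_valuation {R Γ₀ : Type*} [Ring R] [LinearOrderedCommGroupWithZero Γ₀]
    (v : Valuation R Γ₀) (p q : V → R) (κ γ : Γ₀ˣ)
    (hpq : ∀ a b, G.Adj a b → v (p b - p a) * v (q b - q a) = κ)
    {δ : G.edgeSet → Bool} (hδ : Function.Surjective δ)
    (h_red : ∀ a b (h : G.Adj a b), δ ⟨s(a, b), h⟩ = true ↔ v (p b - p a) < γ) :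
    IsNACColoring G δ := by
  refine isNACColoring_of_isDiag_map hδ
    (fun a => (p a : R ⧸ v.ltAddSubgroup γ)) (fun a => (q a : R ⧸ v.leAddSubgroup (κ / γ))) ?_ ?_
  · rintro ⟨⟨a, b⟩, h⟩
    rw [h_red a b h, Sym2.map_mk, Sym2.mk_isDiag_iff, QuotientAddGroup.eq, neg_add_eq_sub,
      Valuation.mem_ltAddSubgroup_iff]
  · rintro ⟨⟨a, b⟩, h⟩
    rw [← Bool.not_eq_true, h_red a b h, not_lt, Sym2.map_mk, Sym2.mk_isDiag_iff,
      QuotientAddGroup.eq, neg_add_eq_sub, Valuation.mem_leAddSubgroup_iff,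
      ← hpq a b h]
    have h_pos : 0 < v (q b - q a) := zero_lt_iff.2 (right_ne_zero_of_mul (hpq a b h ▸ κ.ne_zero))
    rw [le_div_iff₀ (zero_lt_iff.2 γ.ne_zero), mul_comm, mul_le_mul_iff_left₀ h_pos]

theorem colorGap_inclusion_eq_finsum_isNACColoring {G' : SimpleGraph V} (hle : G' ≤ G)
    {w : G.edgeSet → ℤ} (hw : (Set.range w).Finite)
    (hw_nac : ∀ α, Function.Surjective (thresholdColoring w α) →
      IsNACColoring G (thresholdColoring w α))
    {δ' : G'.edgeSet → Bool} (hδ' : Function.Surjective δ') :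
    colorGap (w ∘ Set.inclusion (SimpleGraph.edgeSet_mono hle)) δ' =
      ∑ᶠ δ ∈ {δ : G.edgeSet → Bool | IsNACColoring G δ ∧
          ∀ e : G'.edgeSet, δ ⟨e.1, SimpleGraph.edgeSet_mono hle e.2⟩ = δ' e},
        colorGap w δ := by
  rw [colorGap_comp_eq_finsum hw _ hδ']
  refine finsum_mem_inter_support_eq' _ _ _ fun δ h_gap =>
    ⟨fun h_restr => ⟨?_, congrFun h_restr⟩, fun h => funext h.2⟩
  have hδ : Function.Surjective δ := Function.Surjective.of_comp (h_restr.symm ▸ hδ')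
  obtain ⟨α, rfl⟩ := exists_thresholdColoring_eq hw hδ h_gap
  exact hw_nac α hδ

end NACColoring

section Valuation

open WithZero

variable {R Γ : Type*} [Ring R] [IsDomain R] [AddCommGroup Γ] [LinearOrder Γ]
  [IsOrderedAddMonoid Γ] {ν : R → Γ}

theorem ord_one (hν_mul : ∀ a b : R, a ≠ 0 → b ≠ 0 → ν (a * b) = ν a + ν b) : ν 1 = 0 := by
  simpa using hν_mul 1 1 one_ne_zero one_ne_zero

theorem ord_neg (hν_mul : ∀ a b : R, a ≠ 0 → b ≠ 0 → ν (a * b) = ν a + ν b) (z : R) :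
    ν (-z) = ν z := by
  have h_neg_one : ν (-1) = 0 := by
    have h_add_self := hν_mul (-1) (-1) (by simp) (by simp)
    rw [neg_mul_neg, one_mul, ord_one hν_mul, eq_comm, ← two_nsmul] at h_add_self
    exact two_nsmul_eq_zero.1 h_add_self
  rcases eq_or_ne z 0 with rfl | hz
  · rw [neg_zero]
  · rw [neg_eq_neg_one_mul, hν_mul _ _ (by simp) hz, h_neg_one, zero_add]

open scoped Classical in
/-- The multiplicative valuation `z ↦ exp (-ν z)` attached to an additive valuation `ν` that is
given by its values at nonzero elements. The value `ν 0` is ignored. -/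
def valuationOfOrd (hν_mul : ∀ a b : R, a ≠ 0 → b ≠ 0 → ν (a * b) = ν a + ν b)
    (hν_add : ∀ a b : R, a ≠ 0 → b ≠ 0 → a + b ≠ 0 → min (ν a) (ν b) ≤ ν (a + b)) :
    Valuation R Γᵐ⁰ where
  toFun z := if z = 0 then 0 else exp (-ν z)
  map_zero' := if_pos rfl
  map_one' := by simp [ord_one hν_mul]
  map_mul' a b := by
    rcases eq_or_ne a 0 with rfl | ha
    · simp
    rcases eq_or_ne b 0 with rfl | hb
    · simp
    simp [ha, hb, hν_mul a b ha hb, mul_comm]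
  map_add_le_max' a b := by
    rcases eq_or_ne a 0 with rfl | ha
    · simp
    rcases eq_or_ne b 0 with rfl | hb
    · simp
    rcases eq_or_ne (a + b) 0 with hab | hab
    · simp [hab]
    simpa only [ha, hb, hab, if_false, le_max_iff, exp_le_exp, neg_le_neg_iff, min_le_iff]
      using hν_add a b ha hb hab

theorem valuationOfOrd_apply (hν_mul : ∀ a b : R, a ≠ 0 → b ≠ 0 → ν (a * b) = ν a + ν b)
    (hν_add : ∀ a b : R, a ≠ 0 → b ≠ 0 → a + b ≠ 0 → min (ν a) (ν b) ≤ ν (a + b))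
    {z : R} (hz : z ≠ 0) : valuationOfOrd hν_mul hν_add z = exp (-ν z) :=
  if_neg hz

end Valuation

section Realization

open WithZero

variable {V F : Type*} [Field F] {G H : SimpleGraph V} {ι : ℂ →+* F} {x y : V → F} {ν : F → ℤ}

theorem Wmap_swap (ι : ℂ →+* F) (x y : V → F) (a b : V) :
    Wmap ι x y b a = -Wmap ι x y a b := by
  unfold Wmap
  ring

/-- Negating `y` turns `W_{a,b}` into `Z_{a,b}`. -/
theorem Wmap_mul_Wmap_neg (ι : ℂ →+* F) (x y : V → F) (a b : V) :
    Wmap ι x y a b * Wmap ι x (-y) a b = (x a - x b) ^ 2 + (y a - y b) ^ 2 := by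
  have hI : ι Complex.I * ι Complex.I = -1 := by
    rw [← map_mul, Complex.I_mul_I, map_neg, map_one]
  simp only [Wmap, Pi.neg_apply]
  linear_combination (-(y b - y a) ^ 2) * hI

theorem Wmap_eq_sub (ι : ℂ →+* F) (x y : V → F) (a b : V) :
    Wmap ι x y a b = (x b + ι Complex.I * y b) - (x a + ι Complex.I * y a) := by
  unfold Wmap
  ring

/-- The value `ν(W_e)` as a function of the unordered pair `e`, which is well defined because `W`
changes sign when the endpoints are exchanged. -/
def edgeOrd (ι : ℂ →+* F) (x y : V → F) (hν_neg : ∀ z, ν (-z) = ν z) : Sym2 V → ℤ :=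
  Sym2.lift ⟨fun a b => ν (Wmap ι x y a b), fun a b => by
    simp only [Wmap_swap ι x y a b, hν_neg]⟩

theorem gap_eq_colorGap (hν_neg : ∀ z, ν (-z) = ν z) (δ : H.edgeSet → Bool) :
    gap H δ ι x y ν = colorGap (fun e : H.edgeSet => edgeOrd ι x y hν_neg e) δ := by
  have h_values (c : Bool) :
      {n : ℤ | ∃ a b : V, ∃ h : H.Adj a b,
        δ ⟨s(a, b), H.mem_edgeSet.mpr h⟩ = c ∧ n = ν (Wmap ι x y a b)} =
      (fun e : H.edgeSet => edgeOrd ι x y hν_neg e) '' (δ ⁻¹' {c}) := by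
    ext n
    constructor
    · rintro ⟨a, b, h, hc, rfl⟩
      exact ⟨⟨s(a, b), h⟩, hc, rfl⟩
    · rintro ⟨⟨⟨a, b⟩, h⟩, hc, rfl⟩
      exact ⟨a, b, h, hc, rfl⟩
  rw [gap, h_values, h_values, colorGap]

theorem isNACColoring_thresholdColoring_edgeOrd
    {lam : Sym2 V → F} {k : ℤ} (hlam : ∀ e ∈ G.edgeSet, lam e ≠ 0 ∧ ν (lam e) = k)
    (hedge : ∀ ⦃u v : V⦄, G.Adj u v → (x u - x v) ^ 2 + (y u - y v) ^ 2 = lam s(u, v) ^ 2)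
    (hν_mul : ∀ a b : F, a ≠ 0 → b ≠ 0 → ν (a * b) = ν a + ν b)
    (hν_add : ∀ a b : F, a ≠ 0 → b ≠ 0 → a + b ≠ 0 → min (ν a) (ν b) ≤ ν (a + b)) {α : ℤ}
    (hα : Function.Surjective
      (thresholdColoring (fun e : G.edgeSet => edgeOrd ι x y (ord_neg hν_mul) e) α)) :
    IsNACColoring G
      (thresholdColoring (fun e : G.edgeSet => edgeOrd ι x y (ord_neg hν_mul) e) α) := by
  set v := valuationOfOrd hν_mul hν_add with hv
  have hWZ (a b : V) (h : G.Adj a b) : Wmap ι x y a b * Wmap ι x (-y) a b = lam s(a, b) ^ 2 := by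
    rw [Wmap_mul_Wmap_neg, hedge h]
  refine isNACColoring_of_valuation v (fun a => x a + ι Complex.I * y a)
    (fun a => x a + ι Complex.I * (-y) a) (expEquiv (-k) ^ 2) (expEquiv (-α)) ?_ hα ?_
  · intro a b h
    obtain ⟨h_ne, h_ord⟩ := hlam s(a, b) h
    rw [← Wmap_eq_sub, ← Wmap_eq_sub, ← map_mul, hWZ a b h, map_pow, hv,
      valuationOfOrd_apply hν_mul hν_add h_ne, h_ord]
    rfl
  · intro a b h
    have hW : Wmap ι x y a b ≠ 0 :=
      left_ne_zero_of_mul (hWZ a b h ▸ pow_ne_zero 2 (hlam s(a, b) h).1)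
    rw [← Wmap_eq_sub, hv, valuationOfOrd_apply hν_mul hν_add hW, coe_expEquiv_apply, exp_lt_exp,
      neg_lt_neg_iff]
    exact decide_eq_true_iff

theorem gap_restriction_sum_general
    {G' : SimpleGraph V} (hle : G' ≤ G) (lam : Sym2 V → F) (k : ℤ)
    (hlam : ∀ e ∈ G.edgeSet, lam e ≠ 0 ∧ ν (lam e) = k)
    (hedge : ∀ ⦃u v : V⦄, G.Adj u v → (x u - x v) ^ 2 + (y u - y v) ^ 2 = lam s(u, v) ^ 2)
    (hν_mul : ∀ a b : F, a ≠ 0 → b ≠ 0 → ν (a * b) = ν a + ν b)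
    (hν_add : ∀ a b : F, a ≠ 0 → b ≠ 0 → a + b ≠ 0 → min (ν a) (ν b) ≤ ν (a + b))
    (hfin : {n : ℤ | ∃ u v, G.Adj u v ∧ n = ν (Wmap ι x y u v)}.Finite)
    (δ' : G'.edgeSet → Bool) (hδ' : Function.Surjective δ') :
    gap G' δ' ι x y ν =
      ∑ᶠ δ ∈ {δ : G.edgeSet → Bool | IsNACColoring G δ ∧
          ∀ e : G'.edgeSet, δ ⟨e.1, SimpleGraph.edgeSet_mono hle e.2⟩ = δ' e},
        gap G δ ι x y ν := by
  have h_range : (Set.range fun e : G.edgeSet => edgeOrd ι x y (ord_neg hν_mul) e).Finite := by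
    refine hfin.subset ?_
    rintro _ ⟨⟨⟨a, b⟩, h⟩, rfl⟩
    exact ⟨a, b, h, rfl⟩
  simp only [gap_eq_colorGap (ord_neg hν_mul)]
  exact colorGap_inclusion_eq_finsum_isNACColoring hle h_range
    (fun _ => isNACColoring_thresholdColoring_edgeOrd hlam hedge hν_mul hν_add) hδ'

end Realization

/-- In the valuation setting, for a subgraph `G'` of `G` and a NAC-coloring `δ'` of `G'`,
the gap of `δ'` equals the sum of the gaps of all NAC-colorings of `G` restricting
to `δ'`. -/
theorem gap_restriction_sum
    {V F : Type*} [Fintype V] [Field F] (G G' : SimpleGraph V) (hle : G' ≤ G)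
    (lam : Sym2 V → ℝ)
    (ι : ℂ →+* F) (x y : V → F) (ν : F → ℤ)
    (hpos : ∀ e ∈ G.edgeSet, 0 < lam e)
    (hedge : ∀ ⦃u v : V⦄, G.Adj u v →
      (x u - x v) ^ 2 + (y u - y v) ^ 2 = (ι ((lam s(u, v) : ℝ) : ℂ)) ^ 2)
    (hν_mul : ∀ a b : F, a ≠ 0 → b ≠ 0 → ν (a * b) = ν a + ν b)
    (hν_add : ∀ a b : F, a ≠ 0 → b ≠ 0 → a + b ≠ 0 → min (ν a) (ν b) ≤ ν (a + b))
    (hν_triv : ∀ c : ℂ, c ≠ 0 → ν (ι c) = 0)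
    (hG'ne : G'.edgeSet.Nonempty)
    (δ' : G'.edgeSet → Bool) (hδ' : IsNACColoring G' δ') :
    gap G' δ' ι x y ν =
      ∑ᶠ δ ∈ {δ : G.edgeSet → Bool | IsNACColoring G δ ∧
          ∀ e : G'.edgeSet, δ ⟨e.1, SimpleGraph.edgeSet_mono hle e.2⟩ = δ' e},
        gap G δ ι x y ν := by
  have h_surj : Function.Surjective δ' := Bool.forall_bool.2 ⟨hδ'.2.1, hδ'.1⟩
  refine gap_restriction_sum_general hle (fun e => ι (lam e)) 0 (fun e he => ?_) hedge hν_mul hν_add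
    ((Set.finite_range fun p : V × V => ν (Wmap ι x y p.1 p.2)).subset ?_) δ' h_surj
  · have h_ne : (lam e : ℂ) ≠ 0 := Complex.ofReal_ne_zero.2 (hpos e he).ne'
    exact ⟨(map_ne_zero ι).2 h_ne, hν_triv _ h_ne⟩
  · rintro _ ⟨a, b, _, rfl⟩
    exact ⟨(a, b), rfl⟩
end
end

section
/- In the valuation setting below, for every α ∈ ℤ, if the threshold coloring δ_α is surjective (i.e., both colors occur), then δ_α is a NAC-coloring of G. -/
noncomputable section

/-!
If exactly one step of a closed walk left an additive subgroup `S`, then so would the sum of all the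
steps of a potential `f` along it; but that sum is `0`. Hence no closed walk has exactly one edge
`ab` with `f b - f a ∉ S`.

Put `f = x + iy` and `g = x - iy`, so that `W` and `Z` are the differences of `f` and `g`, and
`ν W + ν Z` is the same for all edges. An edge is blue iff `W` lies outside the subgroup
`{ν > α} ∪ {0}`, and it is red iff `Z` lies outside a subgroup of the form `{ν ≥ β} ∪ {0}`; so
neither color occurs exactly once on a closed walk.
-/

section ClosedWalk

variable {V A B : Type*} [AddGroup A] [AddGroup B] {G : SimpleGraph V}

theorem sub_mem_iff_countP_darts_eq_zero {S : AddSubgroup A} {f : V → A} {q : G.Dart → Bool}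
    (hq : ∀ d, q d = true ↔ f d.snd - f d.fst ∉ S) {u v : V} (p : G.Walk u v)
    (hp : p.darts.countP q ≤ 1) : f v - f u ∈ S ↔ p.darts.countP q = 0 := by
  induction p with
  | nil => simp
  | @cons a b c hab p ih =>
    rw [SimpleGraph.Walk.darts_cons, List.countP_cons] at hp ⊢
    rw [← sub_add_sub_cancel (f c) (f b) (f a)]
    have hstep := hq ⟨(a, b), hab⟩
    by_cases hbad : q ⟨(a, b), hab⟩ = true
    · rw [if_pos hbad] at hp ⊢
      have htail : f c - f b ∈ S := (ih (by lia)).2 (by lia)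
      simpa only [S.add_mem_cancel_left htail, Nat.add_one_ne_zero, iff_false] using hstep.1 hbad
    · have hgood : f b - f a ∈ S := not_not.1 (mt hstep.2 hbad)
      rw [if_neg hbad, add_zero] at hp ⊢
      rw [S.add_mem_cancel_right hgood, ih hp]

theorem countP_darts_ne_one_of_forall_iff_sub_notMem {S : AddSubgroup A} {f : V → A}
    {q : G.Dart → Bool} (hq : ∀ d, q d = true ↔ f d.snd - f d.fst ∉ S) {u : V} (p : G.Walk u u) :
    p.darts.countP q ≠ 1 := by
  intro hone
  have hzero := (sub_mem_iff_countP_darts_eq_zero hq p hone.le).1 (by simp)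
  lia

theorem length_filter_edges_attach (δ : G.edgeSet → Bool) {u v : V} (p : G.Walk u v) :
    (p.edges.attach.filter (fun e => δ ⟨e.1, p.edges_subset_edgeSet e.2⟩)).length =
      p.darts.countP (fun d => δ ⟨d.edge, d.edge_mem⟩) := by
  rw [← List.countP_eq_length_filter]
  simp only [SimpleGraph.Walk.edges, List.attach_map, List.countP_map]
  exact List.countP_attach (p := fun d : G.Dart => δ ⟨d.edge, d.edge_mem⟩)

theorem forall_eq_false_or_two_le_length_filter_of_forall_adj {S : AddSubgroup A} {f : V → A}
    {δ : G.edgeSet → Bool}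
    (hδ : ∀ a b (h : G.Adj a b), δ ⟨s(a, b), G.mem_edgeSet.mpr h⟩ = true ↔ f b - f a ∉ S)
    {u : V} (p : G.Walk u u) :
    (∀ e : G.edgeSet, (e : Sym2 V) ∈ p.edges → δ e = false) ∨
      2 ≤ (p.edges.attach.filter (fun e => δ ⟨e.1, p.edges_subset_edgeSet e.2⟩)).length := by
  rw [length_filter_edges_attach]
  have hne_one := countP_darts_ne_one_of_forall_iff_sub_notMem
    (q := fun d => δ ⟨d.edge, d.edge_mem⟩) (fun d => hδ d.fst d.snd d.adj) p
  refine or_iff_not_imp_right.2 fun hlt => ?_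
  have hzero : p.darts.countP (fun d => δ ⟨d.edge, d.edge_mem⟩) = 0 := by lia
  rintro ⟨_, _⟩ he
  obtain ⟨d, hd, rfl⟩ := List.mem_map.1 he
  simpa using List.countP_eq_zero.1 hzero d hd

theorem isNACColoring_of_forall_adj_sub_notMem {S : AddSubgroup A} {T : AddSubgroup B}
    {f : V → A} {g : V → B} {δ : G.edgeSet → Bool}
    (hδ_blue : ∀ a b (h : G.Adj a b),
      δ ⟨s(a, b), G.mem_edgeSet.mpr h⟩ = false ↔ f b - f a ∉ S)
    (hδ_red : ∀ a b (h : G.Adj a b),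
      δ ⟨s(a, b), G.mem_edgeSet.mpr h⟩ = true ↔ g b - g a ∉ T)
    (hred : ∃ e, δ e = true) (hblue : ∃ e, δ e = false) : IsNACColoring G δ := by
  refine ⟨hred, hblue, fun u p _ => ?_⟩
  have hδ_not : ∀ a b (h : G.Adj a b),
      (!δ ⟨s(a, b), G.mem_edgeSet.mpr h⟩) = true ↔ f b - f a ∉ S := by
    simpa only [Bool.not_eq_true'] using hδ_blue
  rcases forall_eq_false_or_two_le_length_filter_of_forall_adj (δ := fun e => !δ e) hδ_not p with
    all_red | two_blue
  · exact Or.inl (by simpa only [Bool.not_eq_false'] using all_red)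
  rcases forall_eq_false_or_two_le_length_filter_of_forall_adj hδ_red p with all_blue | two_red
  · exact Or.inr (Or.inl all_blue)
  · exact Or.inr (Or.inr ⟨two_red, two_blue⟩)

end ClosedWalk

theorem isNACColoring_of_forall_adj_iff_valuation_lt {V R Γ₀ : Type*} [Ring R]
    [LinearOrderedCommGroupWithZero Γ₀] {G : SimpleGraph V} (v : Valuation R Γ₀) {f g : V → R}
    {γ c : Γ₀ˣ} (hfg : ∀ a b, G.Adj a b → v (f b - f a) * v (g b - g a) = c)
    {δ : G.edgeSet → Bool}
    (hδ : ∀ a b (h : G.Adj a b),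
      δ ⟨s(a, b), G.mem_edgeSet.mpr h⟩ = true ↔ v (f b - f a) < γ)
    (hred : ∃ e, δ e = true) (hblue : ∃ e, δ e = false) : IsNACColoring G δ := by
  refine isNACColoring_of_forall_adj_sub_notMem (S := v.ltAddSubgroup γ)
    (T := v.leAddSubgroup (c / γ)) (f := f) (g := g) (fun a b h => ?_) (fun a b h => ?_) hred hblue
  · rw [Valuation.mem_ltAddSubgroup_iff, ← hδ a b h, Bool.not_eq_true]
  · have hg : 0 < v (g b - g a) :=
      zero_lt_iff.2 (right_ne_zero_of_mul ((hfg a b h).trans_ne c.ne_zero))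
    rw [Valuation.mem_leAddSubgroup_iff, hδ a b h, not_le, div_lt_iff₀ (zero_lt_iff.2 γ.ne_zero),
      ← hfg a b h, mul_comm, mul_lt_mul_iff_right₀ hg]

section ExpNeg

variable {R Γ : Type*} [Ring R] [IsDomain R]
  [AddCommGroup Γ] [LinearOrder Γ] [IsOrderedAddMonoid Γ]

open Classical in
/-- The multiplicative valuation `a ↦ exp (-ν a)` attached to an additive valuation `ν` that is
given only on the nonzero elements; the value of `ν` at `0` is discarded, and `0 ↦ 0`. Large values
of `ν` become small, as Mathlib's `Valuation` requires. -/
def expNegValuation (ν : R → Γ)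
    (hν_mul : ∀ a b : R, a ≠ 0 → b ≠ 0 → ν (a * b) = ν a + ν b)
    (hν_add : ∀ a b : R, a ≠ 0 → b ≠ 0 → a + b ≠ 0 → min (ν a) (ν b) ≤ ν (a + b)) :
    Valuation R (WithZero (Multiplicative Γ)) where
  toFun a := if a = 0 then 0 else WithZero.exp (-ν a)
  map_zero' := if_pos rfl
  map_one' := by
    have hν_one : ν 1 = 0 := by simpa using hν_mul 1 1 one_ne_zero one_ne_zero
    simp [hν_one]
  map_mul' a b := by
    by_cases ha : a = 0
    · simp [ha]
    by_cases hb : b = 0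
    · simp [hb]
    rw [if_neg ha, if_neg hb, if_neg (mul_ne_zero ha hb), hν_mul a b ha hb, neg_add,
      WithZero.exp_add]
  map_add_le_max' a b := by
    by_cases ha : a = 0
    · simp [ha]
    by_cases hb : b = 0
    · simp [hb]
    by_cases hab : a + b = 0
    · simp [hab]
    rw [if_neg ha, if_neg hb, if_neg hab, le_max_iff, WithZero.exp_le_exp, WithZero.exp_le_exp,
      neg_le_neg_iff, neg_le_neg_iff, ← min_le_iff]
    exact hν_add a b ha hb hab

theorem expNegValuation_of_ne_zero {ν : R → Γ}
    (hν_mul : ∀ a b : R, a ≠ 0 → b ≠ 0 → ν (a * b) = ν a + ν b)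
    (hν_add : ∀ a b : R, a ≠ 0 → b ≠ 0 → a + b ≠ 0 → min (ν a) (ν b) ≤ ν (a + b))
    {a : R} (ha : a ≠ 0) : expNegValuation ν hν_mul hν_add a = WithZero.exp (-ν a) :=
  if_neg ha

end ExpNeg

theorem threshold_coloring_is_NAC_general {V R Γ : Type*} [CommRing R] [IsDomain R]
    [AddCommGroup Γ] [LinearOrder Γ] [IsOrderedAddMonoid Γ]
    (G : SimpleGraph V) (len : Sym2 V → R) {I : R} (hI : I * I = -1) (x y : V → R)
    (ν : R → Γ) (α c : Γ)
    (hlen : ∀ e ∈ G.edgeSet, len e ≠ 0)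
    (hedge : ∀ ⦃u v : V⦄, G.Adj u v → (x u - x v) ^ 2 + (y u - y v) ^ 2 = len s(u, v) ^ 2)
    (hν_mul : ∀ a b : R, a ≠ 0 → b ≠ 0 → ν (a * b) = ν a + ν b)
    (hν_add : ∀ a b : R, a ≠ 0 → b ≠ 0 → a + b ≠ 0 → min (ν a) (ν b) ≤ ν (a + b))
    (hν_len : ∀ e ∈ G.edgeSet, ν (len e) = c)
    (δ : G.edgeSet → Bool)
    (hδ : ∀ (a b : V) (h : G.Adj a b),
      δ ⟨s(a, b), G.mem_edgeSet.mpr h⟩ = true ↔ α < ν ((x b - x a) + I * (y b - y a)))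
    (hred : ∃ e, δ e = true) (hblue : ∃ e, δ e = false) :
    IsNACColoring G δ := by
  let f : V → R := fun a => x a + I * y a
  let g : V → R := fun a => x a - I * y a
  let v := expNegValuation ν hν_mul hν_add
  have hf : ∀ a b, f b - f a = (x b - x a) + I * (y b - y a) := fun a b => by ring
  have hfg : ∀ a b, G.Adj a b → (f b - f a) * (g b - g a) = len s(a, b) ^ 2 := fun a b h => by
    linear_combination hedge h - (y b - y a) ^ 2 * hI
  refine isNACColoring_of_forall_adj_iff_valuation_lt v (f := f) (g := g)
    (γ := Units.mk0 (WithZero.exp (-α)) WithZero.exp_ne_zero)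
    (c := Units.mk0 (WithZero.exp (-c)) WithZero.exp_ne_zero ^ 2)
    (fun a b h => ?_) (fun a b h => ?_) hred hblue
  · have he := G.mem_edgeSet.mpr h
    rw [← map_mul, hfg a b h, map_pow, expNegValuation_of_ne_zero _ _ (hlen _ he), hν_len _ he,
      Units.val_pow_eq_pow_val, Units.val_mk0]
  · have hW : f b - f a ≠ 0 := left_ne_zero_of_mul
      ((hfg a b h).trans_ne (pow_ne_zero 2 (hlen _ (G.mem_edgeSet.mpr h))))
    rw [hδ a b h, ← hf, expNegValuation_of_ne_zero _ _ hW, Units.val_mk0, WithZero.exp_lt_exp,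
      neg_lt_neg_iff]

/-- In the valuation setting, every surjective threshold coloring `δ_α`
(an edge is red iff `ν(W_e) > α`) is a NAC-coloring. -/
theorem threshold_coloring_is_NAC
    {V F : Type*} [Fintype V] [Field F] (G : SimpleGraph V) (lam : Sym2 V → ℝ)
    (ι : ℂ →+* F) (x y : V → F) (ν : F → ℤ) (α : ℤ)
    (hpos : ∀ e ∈ G.edgeSet, 0 < lam e)
    (hedge : ∀ ⦃u v : V⦄, G.Adj u v →
      (x u - x v) ^ 2 + (y u - y v) ^ 2 = (ι ((lam s(u, v) : ℝ) : ℂ)) ^ 2)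
    (hν_mul : ∀ a b : F, a ≠ 0 → b ≠ 0 → ν (a * b) = ν a + ν b)
    (hν_add : ∀ a b : F, a ≠ 0 → b ≠ 0 → a + b ≠ 0 → min (ν a) (ν b) ≤ ν (a + b))
    (hν_triv : ∀ c : ℂ, c ≠ 0 → ν (ι c) = 0)
    (δ : G.edgeSet → Bool)
    (hδ : ∀ (a b : V) (h : G.Adj a b),
      δ ⟨s(a, b), G.mem_edgeSet.mpr h⟩ = true ↔ α < ν (Wmap ι x y a b))
    (hred : ∃ e, δ e = true) (hblue : ∃ e, δ e = false) :
    IsNACColoring G δ := by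
  have hlam (e) (he : e ∈ G.edgeSet) : (lam e : ℂ) ≠ 0 := Complex.ofReal_ne_zero.2 (hpos e he).ne'
  exact threshold_coloring_is_NAC_general G (fun e => ι (lam e)) (I := ι Complex.I)
    (by rw [← map_mul, Complex.I_mul_I, map_neg, map_one]) x y ν α 0
    (fun e he => (map_ne_zero ι).2 (hlam e he)) hedge hν_mul hν_add
    (fun e he => hν_triv _ (hlam e he)) δ hδ hred hblue
end
end

section
/- The three-prism graph has exactly two NAC-colorings: the coloring in which the edges 14, 25, 36 are red and the six triangle edges 12, 13, 23, 45, 46, 56 are blue, and its conjugate. -/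
/-- The three-prism graph, with vertices `0,…,5` standing for `1,…,6`. -/
def Prism : SimpleGraph (Fin 6) :=
  SimpleGraph.fromEdgeSet
    {s(0, 1), s(0, 2), s(1, 2), s(3, 4), s(3, 5), s(4, 5), s(0, 3), s(1, 4), s(2, 5)}

/-!
On a cycle, the NAC condition says that no edge is the only one of its color. Hence a surjective
coloring is NAC if and only if every edge joining two vertices of one red (blue) component is itself
red (blue). In particular triangles are monochromatic, and if two opposite edges of a 4-cycle have
the same color, then so do the other two.

In the prism, two of the three matching edges share a color by pigeonhole; the 4-cycle through them
gives both triangles the same color, and the other 4-cycles then give all matching edges the same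
color. Conversely, the red and blue components of the resulting coloring are the columns and rows of
the vertex set, laid out as a 2 × 3 grid.
-/

theorem two_le_length_filter_iff {α : Type*} {l : List α} (hl : l.Nodup) {p : α → Bool} {a : α}
    (ha : a ∈ l) (hpa : p a) : 2 ≤ (l.filter p).length ↔ ∃ b ∈ l, b ≠ a ∧ p b := by
  classical
  rw [← List.toFinset_card_of_nodup (hl.filter p)]
  constructor
  · intro hcard
    obtain ⟨b, hb, hba⟩ := Finset.exists_mem_ne hcard a
    rw [List.mem_toFinset, List.mem_filter] at hb
    exact ⟨b, hb.1, hba, hb.2⟩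
  · rintro ⟨b, hb, hba, hpb⟩
    exact Finset.one_lt_card.2 ⟨b, by simp [hb, hpb], a, by simp [ha, hpa], hba⟩

theorem forall_or_forall_or_two_le_length_filter_iff {α : Type*} {l : List α} (hl : l.Nodup)
    (hlen : 2 ≤ l.length) (p : α → Bool) :
    ((∀ a ∈ l, p a = true) ∨ (∀ a ∈ l, p a = false) ∨
      2 ≤ (l.filter p).length ∧ 2 ≤ (l.filter fun a => !p a).length) ↔
      ∀ a ∈ l, ∃ b ∈ l, b ≠ a ∧ p b = p a := by
  constructor
  · intro h a ha
    have exists_ne : ∃ b ∈ l, b ≠ a := by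
      simpa using (two_le_length_filter_iff hl (p := fun _ => true) ha rfl).1 (by simpa using hlen)
    obtain ⟨b, hb, hba⟩ := exists_ne
    rcases h with hred | hblue | ⟨hred, hblue⟩
    · exact ⟨b, hb, hba, by rw [hred a ha, hred b hb]⟩
    · exact ⟨b, hb, hba, by rw [hblue a ha, hblue b hb]⟩
    · cases hpa : p a
      · simpa using (two_le_length_filter_iff hl ha (by simp [hpa])).1 hblue
      · exact (two_le_length_filter_iff hl ha hpa).1 hred
  · intro h
    by_contra! hnot
    obtain ⟨⟨a, ha, hpa⟩, ⟨b, hb, hpb⟩, hcount⟩ := hnot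
    simp only [ne_eq, Bool.not_eq_true] at hpa
    simp only [ne_eq, Bool.not_eq_false] at hpb
    have two_le_red : 2 ≤ (l.filter p).length :=
      (two_le_length_filter_iff hl hb hpb).2 (by simpa only [hpb] using h b hb)
    have two_le_blue : 2 ≤ (l.filter fun a => !p a).length :=
      (two_le_length_filter_iff hl ha (by simp [hpa])).2 (by simpa [hpa] using h a ha)
    exact (hcount two_le_red).not_ge two_le_blue

theorem eq_id_or_eq_not_of_surjective :
    ∀ {f : Bool → Bool}, Function.Surjective f → f = id ∨ f = not := by
  decide

theorem apply_eq_of_reachable {V β : Type*} {G : SimpleGraph V} {f : V → β}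
    {u v : V} (huv : G.Reachable u v) (hf : ∀ a b, G.Adj a b → f a = f b) : f u = f v := by
  obtain ⟨p⟩ := huv
  induction p with
  | nil => rfl
  | cons hadj _ ih => exact (hf _ _ hadj).trans ih

theorem reachable_of_isCycle {V : Type*} {G H : SimpleGraph V} {u v w : V} {W : G.Walk w w}
    (hW : W.IsCycle) (huv : s(u, v) ∈ W.edges)
    (hH : ∀ e ∈ W.edges, e ≠ s(u, v) → e ∈ H.edgeSet) : H.Reachable u v := by
  let C := W.toSubgraph.spanningCoe
  have mem_C {e : Sym2 V} : e ∈ C.edgeSet ↔ e ∈ W.edges := by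
    rw [SimpleGraph.Subgraph.edgeSet_spanningCoe, W.mem_edges_toSubgraph]
  have reachable : (C.deleteEdges {s(u, v)}).Reachable u v :=
    (SimpleGraph.adj_and_reachable_delete_edges_iff_exists_cycle.2
      ⟨w, W.transfer C fun _ => mem_C.2, hW.transfer _, by rwa [W.edges_transfer]⟩).2
  refine reachable.mono fun a b hab => ?_
  rw [SimpleGraph.deleteEdges_adj, Set.mem_singleton_iff] at hab
  exact hH _ (mem_C.1 hab.1) hab.2

section ColorSubgraph

open SimpleGraph

variable {V : Type*} {G : SimpleGraph V} {δ : G.edgeSet → Bool}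

theorem isNACColoring_iff_forall_isCycle :
    IsNACColoring G δ ↔ Function.Surjective δ ∧ ∀ ⦃u : V⦄ (W : G.Walk u u), W.IsCycle →
      ∀ e : G.edgeSet, ↑e ∈ W.edges → ∃ e' : G.edgeSet, ↑e' ∈ W.edges ∧ e' ≠ e ∧ δ e' = δ e := by
  rw [IsNACColoring, Function.Surjective, Bool.forall_bool, ← and_assoc,
    and_comm (a := ∃ e, δ e = true)]
  refine and_congr_right fun _ => forall_congr' fun u =>
    forall_congr' fun W => forall_congr' fun hW => ?_
  have hlen : 2 ≤ W.edges.attach.length := by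
    rw [List.length_attach, W.length_edges]
    exact le_of_lt hW.three_le_length
  have h := forall_or_forall_or_two_le_length_filter_iff (List.nodup_attach.2 hW.edges_nodup) hlen
    fun e => δ ⟨e.1, W.edges_subset_edgeSet e.2⟩
  have forall_edge_iff : ∀ P : G.edgeSet → Prop, (∀ e : G.edgeSet, ↑e ∈ W.edges → P e) ↔
      ∀ e ∈ W.edges.attach, P ⟨e.1, W.edges_subset_edgeSet e.2⟩ := fun P =>
    ⟨fun hP e _ => hP _ e.2, fun hP e he => hP ⟨e, he⟩ (W.edges.mem_attach _)⟩
  have exists_edge_iff : ∀ P : G.edgeSet → Prop, (∃ e : G.edgeSet, ↑e ∈ W.edges ∧ P e) ↔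
      ∃ e ∈ W.edges.attach, P ⟨e.1, W.edges_subset_edgeSet e.2⟩ := fun P =>
    ⟨fun ⟨e, he, hP⟩ => ⟨⟨e, he⟩, W.edges.mem_attach _, hP⟩, fun ⟨e, _, hP⟩ => ⟨_, e.2, hP⟩⟩
  simpa only [forall_edge_iff, exists_edge_iff, ne_eq, Subtype.ext_iff] using h

/-- The spanning subgraph of `G` formed by the edges of color `c`; a surjective red-blue
coloring is NAC if and only if the connected components of these subgraphs are induced in `G`. -/
def colorSubgraph {α : Type*} (δ : G.edgeSet → α) (c : α) : SimpleGraph V where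
  Adj u v := ∃ h : G.Adj u v, δ ⟨s(u, v), h⟩ = c
  symm := ⟨fun u v ⟨h, hc⟩ => ⟨h.symm, by simpa only [Sym2.eq_swap (a := v)] using hc⟩⟩

theorem colorSubgraph_le {α : Type*} (δ : G.edgeSet → α) (c : α) : colorSubgraph δ c ≤ G :=
  fun _ _ h => h.1

theorem mem_edgeSet_colorSubgraph {α : Type*} {δ : G.edgeSet → α} {c : α} {e : Sym2 V} :
    e ∈ (colorSubgraph δ c).edgeSet ↔ ∃ h : e ∈ G.edgeSet, δ ⟨e, h⟩ = c := by
  induction e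
  rfl

theorem isNACColoring_iff_forall_reachable :
    IsNACColoring G δ ↔ Function.Surjective δ ∧
      ∀ ⦃c : Bool⦄ ⦃u v : V⦄ (h : G.Adj u v), (colorSubgraph δ c).Reachable u v →
        δ ⟨s(u, v), h⟩ = c := by
  rw [isNACColoring_iff_forall_isCycle]
  refine and_congr_right fun _ => ⟨fun hcycle c u v h huv => ?_, fun hreach w W hW e he => ?_⟩
  · by_contra hne
    obtain ⟨p, hp⟩ := huv.symm.exists_isPath
    have edge_color : ∀ {e : Sym2 V}, e ∈ p.edges → ∃ he : e ∈ G.edgeSet, δ ⟨e, he⟩ = c :=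
      fun he => mem_edgeSet_colorSubgraph.1 (p.edges_subset_edgeSet he)
    have isCycle : ((p.mapLe (colorSubgraph_le δ c)).cons h).IsCycle := by
      rw [Walk.cons_isCycle_iff, Walk.edges_mapLe_eq_edges]
      exact ⟨hp.mapLe _, fun hmem => hne (edge_color hmem).2⟩
    obtain ⟨e, he, hne', hcolor⟩ := hcycle _ isCycle ⟨s(u, v), h⟩ (by simp)
    rw [Walk.edges_cons, Walk.edges_mapLe_eq_edges, List.mem_cons] at he
    have he' := he.resolve_left fun h' => hne' (Subtype.ext h')
    exact hne (hcolor.symm.trans (edge_color he').2)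
  · by_contra! hunique
    obtain ⟨⟨u, v⟩, huv⟩ := e
    have reachable : (colorSubgraph δ (!δ ⟨s(u, v), huv⟩)).Reachable u v := by
      refine reachable_of_isCycle hW he fun e' he' hne => mem_edgeSet_colorSubgraph.2 ?_
      exact ⟨W.edges_subset_edgeSet he', Bool.eq_not.2 <| hunique _ he' <| Subtype.coe_ne_coe.1 hne⟩
    exact Bool.not_ne_self _ (hreach huv reachable).symm

theorem isNACColoring_of_forall_eq_iff {β : Type*} (hδ : Function.Surjective δ) (f : Bool → V → β)
    (hf : ∀ c u v (h : G.Adj u v), δ ⟨s(u, v), h⟩ = c ↔ f c u = f c v) : IsNACColoring G δ := by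
  refine isNACColoring_iff_forall_reachable.2 ⟨hδ, fun c u v h huv => (hf c u v h).2 ?_⟩
  exact apply_eq_of_reachable huv fun a b ⟨hab, hcolor⟩ => (hf c a b hab).1 hcolor

namespace IsNACColoring

theorem surjective (hδ : IsNACColoring G δ) : Function.Surjective δ :=
  (isNACColoring_iff_forall_isCycle.1 hδ).1

theorem compl (hδ : IsNACColoring G δ) : IsNACColoring G fun e => !δ e := by
  rw [isNACColoring_iff_forall_isCycle] at hδ ⊢
  exact ⟨Bool.involutive_not.surjective.comp hδ.1, by simpa only [Bool.not_inj_iff] using hδ.2⟩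

theorem color_eq_of_reachable (hδ : IsNACColoring G δ) {c : Bool} {u v : V} (h : G.Adj u v)
    (huv : (colorSubgraph δ c).Reachable u v) : δ ⟨s(u, v), h⟩ = c :=
  (isNACColoring_iff_forall_reachable.1 hδ).2 h huv

theorem colorSubgraph_adj_of_triangle (hδ : IsNACColoring G δ) {c : Bool} {u v w : V}
    (huv : (colorSubgraph δ c).Adj u v) (hvw : G.Adj v w) (huw : G.Adj u w) :
    (colorSubgraph δ c).Adj v w := by
  refine ⟨hvw, ?_⟩
  by_cases huw_color : δ ⟨s(u, w), huw⟩ = c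
  · have huw' : (colorSubgraph δ c).Adj u w := ⟨huw, huw_color⟩
    exact hδ.color_eq_of_reachable hvw (huv.symm.reachable.trans huw'.reachable)
  · by_contra hvw_color
    have huw' : (colorSubgraph δ (!c)).Adj u w := ⟨huw, Bool.eq_not.2 huw_color⟩
    have hvw' : (colorSubgraph δ (!c)).Adj v w := ⟨hvw, Bool.eq_not.2 hvw_color⟩
    have huv_color : δ ⟨s(u, v), huv.1⟩ = !c :=
      hδ.color_eq_of_reachable huv.1 (huw'.reachable.trans hvw'.symm.reachable)
    exact Bool.not_ne_self c (huv_color.symm.trans huv.2)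

theorem colorSubgraph_adj_of_square (hδ : IsNACColoring G δ) {c k : Bool} {u v u' v' : V}
    (hu : (colorSubgraph δ k).Adj u u') (hv : (colorSubgraph δ k).Adj v v')
    (huv : (colorSubgraph δ c).Adj u v) (huv' : G.Adj u' v') :
    (colorSubgraph δ c).Adj u' v' := by
  refine ⟨huv', ?_⟩
  by_cases hck : c = k
  · subst hck
    exact hδ.color_eq_of_reachable huv'
      (hu.symm.reachable.trans (huv.reachable.trans hv.reachable))
  · by_contra huv'_color
    have huv'_adj : (colorSubgraph δ k).Adj u' v' :=
      ⟨huv', by rw [Bool.eq_not.2 huv'_color, Bool.not_eq.2 hck]⟩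
    have huv_color : δ ⟨s(u, v), huv.1⟩ = k := hδ.color_eq_of_reachable huv.1
      (hu.reachable.trans (huv'_adj.reachable.trans hv.symm.reachable))
    exact hck (huv.2.symm.trans huv_color)

theorem exists_pairwise_colorSubgraph_adj (hδ : IsNACColoring G δ) {ι : Type*} {u : ι → V}
    (hu : Pairwise fun i j => G.Adj (u i) (u j)) :
    ∃ c, Pairwise fun i j => (colorSubgraph δ c).Adj (u i) (u j) := by
  rcases subsingleton_or_nontrivial ι with hι | hι
  · exact ⟨true, Subsingleton.pairwise⟩
  obtain ⟨i, j, hij⟩ := exists_pair_ne ι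
  refine ⟨δ ⟨s(u i, u j), hu hij⟩, ?_⟩
  set c := δ ⟨s(u i, u j), hu hij⟩
  have adj_trans {a b d : ι} (hab : (colorSubgraph δ c).Adj (u a) (u b)) (hbd : b ≠ d) :
      (colorSubgraph δ c).Adj (u b) (u d) := by
    obtain rfl | had := eq_or_ne a d
    · exact hab.symm
    · exact hδ.colorSubgraph_adj_of_triangle hab (hu hbd) (hu had)
  have hij_adj : (colorSubgraph δ c).Adj (u i) (u j) := ⟨hu hij, rfl⟩
  intro k l hkl
  obtain rfl | hjk := eq_or_ne j k
  · exact adj_trans hij_adj hkl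
  · exact adj_trans (adj_trans hij_adj hjk) hkl

theorem exists_colorSubgraph_adj_of_prism (hδ : IsNACColoring G δ) {ι : Type*} [Fintype ι]
    (hι : 2 < Fintype.card ι) {u v : ι → V} (hu : Pairwise fun i j => G.Adj (u i) (u j))
    (hv : Pairwise fun i j => G.Adj (v i) (v j)) (huv : ∀ i, G.Adj (u i) (v i)) :
    ∃ c k, (Pairwise fun i j => (colorSubgraph δ c).Adj (u i) (u j)) ∧
      (Pairwise fun i j => (colorSubgraph δ c).Adj (v i) (v j)) ∧
      ∀ i, (colorSubgraph δ k).Adj (u i) (v i) := by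
  obtain ⟨c, hc⟩ := hδ.exists_pairwise_colorSubgraph_adj hu
  obtain ⟨d, hd⟩ := hδ.exists_pairwise_colorSubgraph_adj hv
  obtain ⟨i, j, hij, hrungs⟩ := Fintype.exists_ne_map_eq_of_card_lt
    (fun i => δ ⟨s(u i, v i), huv i⟩) (by simpa using hι)
  set k := δ ⟨s(u i, v i), huv i⟩
  have hi : (colorSubgraph δ k).Adj (u i) (v i) := ⟨huv i, rfl⟩
  have hj : (colorSubgraph δ k).Adj (u j) (v j) := ⟨huv j, hrungs.symm⟩
  have hcd : c = d :=
    (hδ.colorSubgraph_adj_of_square hi hj (hc hij) (hv hij)).2.symm.trans (hd hij).2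
  subst hcd
  refine ⟨c, k, hc, hd, fun l => ?_⟩
  obtain rfl | hil := eq_or_ne i l
  · exact hi
  · exact hδ.colorSubgraph_adj_of_square (hc hil) (hd hil) hi (huv l)

end IsNACColoring

end ColorSubgraph

instance : DecidableRel Prism.Adj :=
  inferInstanceAs (DecidableRel (SimpleGraph.fromEdgeSet _).Adj)

/-- The coloring of the prism in which exactly the perfect matching joining the two triangles is
red. -/
def matchingColoring (e : Prism.edgeSet) : Bool :=
  decide (e.1 = s(0, 3) ∨ e.1 = s(1, 4) ∨ e.1 = s(2, 5))

theorem isNACColoring_matchingColoring : IsNACColoring Prism matchingColoring :=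
  isNACColoring_of_forall_eq_iff (by decide)
    (fun c u => bif c then u.val % 3 else u.val / 3) (by decide)

theorem prism_adj_cases : ∀ {a b : Fin 6} (h : Prism.Adj a b),
    matchingColoring ⟨s(a, b), h⟩ = false ∧ (∃ i j : Fin 3, i ≠ j ∧
      (a = i.castAdd 3 ∧ b = j.castAdd 3 ∨ a = i.natAdd 3 ∧ b = j.natAdd 3)) ∨
    matchingColoring ⟨s(a, b), h⟩ = true ∧ ∃ i : Fin 3,
      (a = i.castAdd 3 ∧ b = i.natAdd 3 ∨ a = i.natAdd 3 ∧ b = i.castAdd 3) := by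
  decide

theorem IsNACColoring.exists_eq_comp_matchingColoring {δ : Prism.edgeSet → Bool}
    (hδ : IsNACColoring Prism δ) : ∃ f : Bool → Bool, δ = f ∘ matchingColoring := by
  have lower_triangle : Pairwise fun i j : Fin 3 => Prism.Adj (i.castAdd 3) (j.castAdd 3) := by
    unfold Pairwise; decide
  have upper_triangle : Pairwise fun i j : Fin 3 => Prism.Adj (i.natAdd 3) (j.natAdd 3) := by
    unfold Pairwise; decide
  have matching : ∀ i : Fin 3, Prism.Adj (i.castAdd 3) (i.natAdd 3) := by decide
  obtain ⟨c, k, hlower, hupper, hmatching⟩ :=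
    hδ.exists_colorSubgraph_adj_of_prism (by decide) lower_triangle upper_triangle matching
  refine ⟨fun b => bif b then k else c, funext fun ⟨e, he⟩ => ?_⟩
  induction e with | _ a b
  rw [Function.comp_apply]
  rcases prism_adj_cases he with
    ⟨hm, i, j, hij, ⟨rfl, rfl⟩ | ⟨rfl, rfl⟩⟩ | ⟨hm, i, ⟨rfl, rfl⟩ | ⟨rfl, rfl⟩⟩ <;>
    rw [hm]
  exacts [(hlower hij).2, (hupper hij).2, (hmatching i).2, (hmatching i).symm.2]

/-- The three-prism has exactly two NAC-colorings: the one whose red edges are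
`14, 25, 36` (here `s(0,3), s(1,4), s(2,5)`) and blue edges the six triangle edges,
and its conjugate. -/
theorem prism_NAC_colorings :
    {δ : Prism.edgeSet → Bool | IsNACColoring Prism δ} =
      {fun (e : Prism.edgeSet) =>
          decide (e.1 = s(0, 3) ∨ e.1 = s(1, 4) ∨ e.1 = s(2, 5)),
       fun (e : Prism.edgeSet) =>
          !decide (e.1 = s(0, 3) ∨ e.1 = s(1, 4) ∨ e.1 = s(2, 5))} := by
  refine Set.Subset.antisymm (fun δ hδ => ?_) (Set.pair_subset
    isNACColoring_matchingColoring isNACColoring_matchingColoring.compl)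
  obtain ⟨f, rfl⟩ := IsNACColoring.exists_eq_comp_matchingColoring hδ
  rcases eq_id_or_eq_not_of_surjective hδ.surjective.of_comp with rfl | rfl
  · exact Or.inl rfl
  · exact Or.inr rfl
end
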